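/- The theory T*_feq (the model completion of T_feq) does not have SOP₁: no formula φ(x̄,ȳ) exemplifies SOP₁ in the monster model of T*_feq. -/

import Mathlib

open FirstOrder FirstOrder.Language

namespace SopPaper

variable {L : FirstOrder.Language.{0, 0}}

/-- A first-order formula with parameters from `M`, in free variables indexed by `Fin m`. -/
structure ParamFormula (L : FirstOrder.Language.{0, 0}) (M : Type*) [L.Structure M] (m : ℕ) where
  k : ℕ
  toFormula : L.Formula (Fin m ⊕ Fin k)
  par : Fin k → M

variable {M : Type*} [L.Structure M]

/-- Realization of a formula with parameters at a tuple `e`. -/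
def ParamFormula.Realize {m : ℕ} (ψ : ParamFormula L M m) (e : Fin m → M) : Prop :=
  ψ.toFormula.Realize (Sum.elim e ψ.par)

/-- A tuple `e` realizes the partial type `p`. -/
def Realizes {m : ℕ} (p : Set (ParamFormula L M m)) (e : Fin m → M) : Prop :=
  ∀ ψ ∈ p, ψ.Realize e

/-- A partial type (over the monster model) is consistent iff it is realized. -/
def Consistent {m : ℕ} (p : Set (ParamFormula L M m)) : Prop :=
  ∃ e, Realizes p e

/-- The restriction `ρ ↾ k` of an infinite branch `ρ ∈ 2^ω` to a finite sequence. -/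
def restrict (ρ : ℕ → Bool) (k : ℕ) : List Bool :=
  List.ofFn fun i : Fin k => ρ i

/-- `φ(x̄, ȳ)` exemplifies SOP₁ in the structure `M` (thought of as the monster model):
there is a tree of parameters `⟨ā_η : η ∈ 2^{<ω}⟩` such that every branch is consistent,
and `{φ(x̄, ā_η), φ(x̄, ā_{ν⌢⟨1⟩})}` is inconsistent whenever `ν⌢⟨0⟩ ⊴ η`. -/
def ExemplifiesSOP1 {mx my : ℕ} (φ : L.Formula (Fin mx ⊕ Fin my)) (M : Type*)
    [L.Structure M] : Prop :=
  ∃ a : List Bool → Fin my → M,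
    (∀ ρ : ℕ → Bool, ∃ e : Fin mx → M, ∀ k : ℕ,
        φ.Realize (Sum.elim e (a (restrict ρ k)))) ∧
    ∀ ν η : List Bool, (ν ++ [false]) <+: η →
      ¬ ∃ e : Fin mx → M,
          φ.Realize (Sum.elim e (a η)) ∧ φ.Realize (Sum.elim e (a (ν ++ [true])))

/-- `φ(x̄, ȳ)` exemplifies SOP₁' in the structure `M`:  there is a tree of parameters
`⟨ā_η : η ∈ 2^{<ω}⟩` such that for every branch `ρ ∈ 2^ω` the signed set
`{φ(x̄, ā_{ρ↾n})^{ρ(n)} : n < ω}` is consistent, and `{φ(x̄, ā_η), φ(x̄, ā_ν)}` is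
inconsistent whenever `ν⌢⟨0⟩ ⊴ η`. -/
def ExemplifiesSOP1' {mx my : ℕ} (φ : L.Formula (Fin mx ⊕ Fin my)) (M : Type*)
    [L.Structure M] : Prop :=
  ∃ a : List Bool → Fin my → M,
    (∀ ρ : ℕ → Bool, ∃ e : Fin mx → M, ∀ k : ℕ,
        (φ.Realize (Sum.elim e (a (restrict ρ k))) ↔ ρ k = true)) ∧
    ∀ ν η : List Bool, (ν ++ [false]) <+: η →
      ¬ ∃ e : Fin mx → M,
          φ.Realize (Sum.elim e (a η)) ∧ φ.Realize (Sum.elim e (a ν))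

/-- The formula `¬ (∃ x̄)(φ(x̄, ȳ) ∧ φ(x̄, z̄))` in the variables `ȳ ⊕ z̄`. -/
def incompatFormula {mx my : ℕ} (φ : L.Formula (Fin mx ⊕ Fin my)) :
    L.Formula (Fin my ⊕ Fin my) :=
  (((BoundedFormula.relabel
        (Sum.elim (fun i => Sum.inr i) fun j => Sum.inl (Sum.inl j)) φ) ⊓
      (BoundedFormula.relabel
        (Sum.elim (fun i => Sum.inr i) fun j => Sum.inl (Sum.inr j)) φ)).exs).not

/-- `rk¹_φ(p, q) ≥ n`. -/
def RankGE {mx my : ℕ} (φ : L.Formula (Fin mx ⊕ Fin my)) :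
    ℕ → Set (ParamFormula L M mx) → Set (ParamFormula L M my) → Prop
  | 0, p, q => Consistent p ∧ Consistent q
  | n + 1, p, q =>
      ∃ c : Fin my → M, Realizes q c ∧
        RankGE φ n (insert ⟨my, φ, c⟩ p) q ∧
        RankGE φ n p (insert ⟨my, incompatFormula φ, c⟩ q)

/-- `a` is a `φ`-SOP₁' tree for `p(x̄)` and `q(ȳ)` of depth `n`. -/
def IsSOP1'Tree {mx my : ℕ} (φ : L.Formula (Fin mx ⊕ Fin my))
    (p : Set (ParamFormula L M mx)) (q : Set (ParamFormula L M my))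
    (n : ℕ) (a : List Bool → Fin my → M) : Prop :=
  (∀ η : List Bool, η.length = n → ∃ e : Fin mx → M, Realizes p e ∧
      ∀ ℓ : ℕ, ℓ < n →
        (φ.Realize (Sum.elim e (a (η.take ℓ))) ↔ η.getD ℓ false = true)) ∧
  (∀ η : List Bool, η.length ≤ n → Realizes q (a η)) ∧
  (∀ ν η : List Bool, η.length ≤ n → (ν ++ [false]) <+: η →
      ¬ ∃ e : Fin mx → M,
          φ.Realize (Sum.elim e (a η)) ∧ φ.Realize (Sum.elim e (a ν)))

/-- `φ(x̄, ȳ)` exemplifies SOP₂ in the structure `M`. -/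
def ExemplifiesSOP2 {mx my : ℕ} (φ : L.Formula (Fin mx ⊕ Fin my)) (M : Type*)
    [L.Structure M] : Prop :=
  ∃ a : List Bool → Fin my → M,
    (∀ ρ : ℕ → Bool, ∃ e : Fin mx → M, ∀ k : ℕ,
        φ.Realize (Sum.elim e (a (restrict ρ k)))) ∧
    ∀ η ν : List Bool, ¬ η <+: ν → ¬ ν <+: η →
      ¬ ∃ e : Fin mx → M,
          φ.Realize (Sum.elim e (a η)) ∧ φ.Realize (Sum.elim e (a ν))


/-- The language `{Q, P, E, R, F}` of `T_feq`: a binary function symbol `F`. -/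
inductive FeqFunc : ℕ → Type
  | F : FeqFunc 2

/-- The relation symbols of `T_feq`: unary `P`, `Q` and binary `E`, `R`. -/
inductive FeqRel : ℕ → Type
  | P : FeqRel 1
  | Q : FeqRel 1
  | E : FeqRel 2
  | R : FeqRel 2

/-- The language `{Q, P, E, R, F}`. -/
def Lfeq : FirstOrder.Language.{0, 0} := ⟨FeqFunc, FeqRel⟩

section Feq

variable {M : Type*} [Lfeq.Structure M]

/-- The predicate `P`. -/
def feqP (x : M) : Prop := Structure.RelMap (L := Lfeq) FeqRel.P ![x]

/-- The predicate `Q`. -/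
def feqQ (x : M) : Prop := Structure.RelMap (L := Lfeq) FeqRel.Q ![x]

/-- The relation `E`. -/
def feqE (x y : M) : Prop := Structure.RelMap (L := Lfeq) FeqRel.E ![x, y]

/-- The relation `R`. -/
def feqR (x y : M) : Prop := Structure.RelMap (L := Lfeq) FeqRel.R ![x, y]

/-- The function `F`. -/
def feqF (x z : M) : M := Structure.funMap (L := Lfeq) FeqFunc.F ![x, z]

/-- The axioms of `T_feq`: `P` and `Q` are disjoint unary predicates covering the universe;
`E` is an equivalence relation on `Q`; `R ⊆ Q × P` is such that
`x R z & y R z & x E y` implies `x = y`; and `F : Q × P → Q` satisfies `F(x,z) R z` and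
`x E F(x,z)` (so `F(x,z)` picks the representative of the `E`-class of `x` that is in the
relation `R` with `z`). -/
def IsFeqStructure (M : Type*) [Lfeq.Structure M] : Prop :=
  (∀ x : M, feqP x ∨ feqQ x) ∧
  (∀ x : M, ¬ (feqP x ∧ feqQ x)) ∧
  (∀ x y : M, feqE x y → feqQ x ∧ feqQ y) ∧
  (∀ x : M, feqQ x → feqE x x) ∧
  (∀ x y : M, feqE x y → feqE y x) ∧
  (∀ x y z : M, feqE x y → feqE y z → feqE x z) ∧
  (∀ x z : M, feqR x z → feqQ x ∧ feqP z) ∧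
  (∀ x y z : M, feqR x z → feqR y z → feqE x y → x = y) ∧
  (∀ x z : M, feqQ x → feqP z → feqQ (feqF x z) ∧ feqR (feqF x z) z ∧ feqE x (feqF x z))

end Feq

/-- The theory `T_feq` : the (deductively closed) set of all sentences true in every
structure satisfying the `T_feq` axioms. -/
def Tfeq : Lfeq.Theory :=
  {σ | ∀ (M : Type) (S : Lfeq.Structure M), Nonempty M → @IsFeqStructure M S →
    @Sentence.Realize Lfeq M S σ}

/-- `T'` is the model completion of `T`:  every model of `T'` is a model of `T`; every model
of `T` embeds into a model of `T'`; `T'` is model complete (all embeddings between its models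
are elementary); and `T' ∪ Diag(A)` is complete for every model `A` of `T` (any two models of
`T'` extending a common model of `T` satisfy the same formulas with parameters in it). -/
def IsModelCompletion {L : FirstOrder.Language.{0, 0}} (T T' : L.Theory) : Prop :=
  (∀ N : Theory.ModelType.{0, 0, 0} T', (N : Type) ⊨ T) ∧
  (∀ M : Theory.ModelType.{0, 0, 0} T, ∃ N : Theory.ModelType.{0, 0, 0} T',
      Nonempty ((M : Type) ↪[L] (N : Type))) ∧
  (∀ (M N : Theory.ModelType.{0, 0, 0} T') (f : (M : Type) ↪[L] (N : Type)) (k : ℕ)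
      (ψ : L.Formula (Fin k)) (v : Fin k → M),
      ψ.Realize (f ∘ v) ↔ ψ.Realize v) ∧
  (∀ (A : Theory.ModelType.{0, 0, 0} T) (N₁ N₂ : Theory.ModelType.{0, 0, 0} T')
      (f₁ : (A : Type) ↪[L] (N₁ : Type)) (f₂ : (A : Type) ↪[L] (N₂ : Type)) (k : ℕ)
      (ψ : L.Formula (Fin k)) (v : Fin k → A),
      ψ.Realize (f₁ ∘ v) ↔ ψ.Realize (f₂ ∘ v))

/-!
A tree witnessing SOP₁ of `φ` yields, by the pigeonhole principle along a branch, pairs of nodes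
satisfying more and more of the same formulas over the tree. An ultrapower turns them into an array
of pairs `(c p 0, c p 1)`, indexed by `p ∈ ℝ`, that is independent over the tree `b`, and a common
solution `e` of all `φ(x̄, c p 0)`. As `e` generates a countable structure over `b`, it is
independent from `c p 0` and from `c q 0` for some `p < q`. Since `T_feq`-structures amalgamate
along such independent triangles, in some model a single tuple is related to `c q 0` and to `c p 1`
as `e` is to `c q 0` and to `c p 0`. It satisfies `φ(x̄, c q 0) ∧ φ(x̄, c p 1)`, which SOP₁ makes
inconsistent.
-/

namespace IsFeqStructure

variable {N : Type*} [Lfeq.Structure N] {x y z : N}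

lemma feqQ_iff_not_feqP (hN : IsFeqStructure N) : feqQ x ↔ ¬ feqP x :=
  ⟨fun hQ hP => hN.2.1 x ⟨hP, hQ⟩, (hN.1 x).resolve_left⟩

lemma feqQ_of_feqE (hN : IsFeqStructure N) (h : feqE x y) : feqQ x ∧ feqQ y := hN.2.2.1 x y h

lemma feqE_refl (hN : IsFeqStructure N) (h : feqQ x) : feqE x x := hN.2.2.2.1 x h

lemma feqE_symm (hN : IsFeqStructure N) (h : feqE x y) : feqE y x := hN.2.2.2.2.1 x y h

lemma feqE_trans (hN : IsFeqStructure N) (hxy : feqE x y) (hyz : feqE y z) : feqE x z :=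
  hN.2.2.2.2.2.1 x y z hxy hyz

lemma feqQ_feqP_of_feqR (hN : IsFeqStructure N) (h : feqR x z) : feqQ x ∧ feqP z :=
  hN.2.2.2.2.2.2.1 x z h

lemma eq_of_feqR_of_feqE (hN : IsFeqStructure N) (hxz : feqR x z) (hyz : feqR y z)
    (hxy : feqE x y) : x = y :=
  hN.2.2.2.2.2.2.2.1 x y z hxz hyz hxy

lemma feqF_spec (hN : IsFeqStructure N) (hx : feqQ x) (hz : feqP z) :
    feqQ (feqF x z) ∧ feqR (feqF x z) z ∧ feqE x (feqF x z) :=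
  hN.2.2.2.2.2.2.2.2 x z hx hz

lemma feqE_feqF (hN : IsFeqStructure N) (hx : feqQ x) (hz : feqP z) : feqE x (feqF x z) :=
  (hN.feqF_spec hx hz).2.2

lemma feqF_congr (hN : IsFeqStructure N) (hz : feqP z) (h : feqE x y) : feqF x z = feqF y z := by
  obtain ⟨hx, hy⟩ := hN.feqQ_of_feqE h
  obtain ⟨-, hRx, hEx⟩ := hN.feqF_spec hx hz
  obtain ⟨-, hRy, hEy⟩ := hN.feqF_spec hy hz
  exact hN.eq_of_feqR_of_feqE hRx hRy (hN.feqE_trans (hN.feqE_symm hEx) (hN.feqE_trans h hEy))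

lemma feqR_iff (hN : IsFeqStructure N) : feqR x z ↔ feqQ x ∧ feqP z ∧ feqF x z = x := by
  constructor
  · intro h
    obtain ⟨hx, hz⟩ := hN.feqQ_feqP_of_feqR h
    obtain ⟨-, hR, hE⟩ := hN.feqF_spec hx hz
    exact ⟨hx, hz, hN.eq_of_feqR_of_feqE hR h (hN.feqE_symm hE)⟩
  · rintro ⟨hx, hz, hF⟩
    exact hF ▸ (hN.feqF_spec hx hz).2.1

end IsFeqStructure

section Axioms

variable {α : Type*}

/-- The formula `P(t)`. -/
def fmlP (t : Lfeq.Term α) : Lfeq.Formula α := Relations.formula₁ (L := Lfeq) FeqRel.P t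

/-- The formula `Q(t)`. -/
def fmlQ (t : Lfeq.Term α) : Lfeq.Formula α := Relations.formula₁ (L := Lfeq) FeqRel.Q t

/-- The formula `E(t, s)`. -/
def fmlE (t s : Lfeq.Term α) : Lfeq.Formula α := Relations.formula₂ (L := Lfeq) FeqRel.E t s

/-- The formula `R(t, s)`. -/
def fmlR (t s : Lfeq.Term α) : Lfeq.Formula α := Relations.formula₂ (L := Lfeq) FeqRel.R t s

/-- The term `F(t, s)`. -/
def termF (t s : Lfeq.Term α) : Lfeq.Term α := Functions.apply₂ (L := Lfeq) FeqFunc.F t s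

variable {M : Type*} [Lfeq.Structure M] {v : α → M} {t s : Lfeq.Term α}

@[simp] lemma realize_fmlP : (fmlP t).Realize v ↔ feqP (t.realize v) := Formula.realize_rel₁

@[simp] lemma realize_fmlQ : (fmlQ t).Realize v ↔ feqQ (t.realize v) := Formula.realize_rel₁

@[simp] lemma realize_fmlE : (fmlE t s).Realize v ↔ feqE (t.realize v) (s.realize v) :=
  Formula.realize_rel₂

@[simp] lemma realize_fmlR : (fmlR t s).Realize v ↔ feqR (t.realize v) (s.realize v) :=
  Formula.realize_rel₂

@[simp] lemma realize_termF : (termF t s).realize v = feqF (t.realize v) (s.realize v) :=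
  Term.realize_functions_apply₂

lemma realize_of_models_Tfeq {M : Type} [Lfeq.Structure M] (hM : M ⊨ Tfeq) {k : ℕ}
    (ψ : Lfeq.Formula (Fin k))
    (hψ : ∀ (N : Type) [Lfeq.Structure N], IsFeqStructure N → ∀ v : Fin k → N, ψ.Realize v)
    (v : Fin k → M) : ψ.Realize v := by
  let σ : Lfeq.Sentence := (ψ.relabel (Sum.inr : Fin k → Empty ⊕ Fin k)).iAlls (Fin k)
  have realize_σ (N : Type) [Lfeq.Structure N] :
      Sentence.Realize N σ ↔ ∀ v : Fin k → N, ψ.Realize v := by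
    simp only [σ, Sentence.Realize, Formula.realize_iAlls, Formula.realize_relabel,
      Sum.elim_comp_inr]
  exact (realize_σ M).1 (hM.realize_of_mem σ fun N _ _ hN => (realize_σ N).2 (hψ N hN)) v

lemma isFeqStructure_of_models {M : Type} [Lfeq.Structure M] (hM : M ⊨ Tfeq) :
    IsFeqStructure M := by
  let x : Lfeq.Term (Fin 3) := .var 0
  let y : Lfeq.Term (Fin 3) := .var 1
  let z : Lfeq.Term (Fin 3) := .var 2
  have transfer := realize_of_models_Tfeq hM (k := 3)
  refine ⟨fun a => ?_, fun a => ?_, fun a b => ?_, fun a => ?_, fun a b => ?_, fun a b c => ?_,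
    fun a c => ?_, fun a b c => ?_, fun a c => ?_⟩
  · simpa [x] using transfer (fmlP x ⊔ fmlQ x) (fun N _ hN v => by simpa [x] using hN.1 _)
      ![a, a, a]
  · simpa [x] using transfer (fmlP x ⊓ fmlQ x).not (fun N _ hN v => by simpa [x] using hN.2.1 _)
      ![a, a, a]
  · simpa [x, y] using transfer ((fmlE x y).imp (fmlQ x ⊓ fmlQ y))
      (fun N _ hN v => by simpa [x, y] using hN.feqQ_of_feqE) ![a, b, a]
  · simpa [x] using transfer ((fmlQ x).imp (fmlE x x))
      (fun N _ hN v => by simpa [x] using hN.feqE_refl) ![a, a, a]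
  · simpa [x, y] using transfer ((fmlE x y).imp (fmlE y x))
      (fun N _ hN v => by simpa [x, y] using hN.feqE_symm) ![a, b, a]
  · simpa [x, y, z] using transfer ((fmlE x y).imp ((fmlE y z).imp (fmlE x z)))
      (fun N _ hN v => by simpa [x, y, z] using hN.feqE_trans) ![a, b, c]
  · simpa [x, z] using transfer ((fmlR x z).imp (fmlQ x ⊓ fmlP z))
      (fun N _ hN v => by simpa [x, z] using hN.feqQ_feqP_of_feqR) ![a, a, c]
  · simpa [x, y, z] using transfer
      ((fmlR x z).imp ((fmlR y z).imp ((fmlE x y).imp (x.equal y))))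
      (fun N _ hN v => by simpa [x, y, z] using hN.eq_of_feqR_of_feqE) ![a, b, c]
  · simpa [x, z] using transfer
      ((fmlQ x).imp ((fmlP z).imp
        (fmlQ (termF x z) ⊓ (fmlR (termF x z) z ⊓ fmlE x (termF x z)))))
      (fun N _ hN v => by simpa [x, z] using hN.feqF_spec) ![a, a, c]

lemma models_of_isFeqStructure {M : Type} [Lfeq.Structure M] [Nonempty M]
    (h : IsFeqStructure M) : M ⊨ Tfeq :=
  ⟨fun _ hσ => hσ M inferInstance inferInstance h⟩

end Axioms

section Embedding

/-- The `Lfeq`-structure with prescribed interpretations of the symbols. -/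
@[reducible] def mkFeqStructure {D : Type*} (p q : D → Prop) (e r : D → D → Prop)
    (f : D → D → D) : Lfeq.Structure D where
  funMap g v := match g with
    | FeqFunc.F => f (v 0) (v 1)
  RelMap s v := match s with
    | FeqRel.P => p (v 0)
    | FeqRel.Q => q (v 0)
    | FeqRel.E => e (v 0) (v 1)
    | FeqRel.R => r (v 0) (v 1)

/-- An embedding of `T_feq`-structures from the data that determine it: `Q` and `R` are definable
from `P`, `E` and `F`. -/
def feqEmbedding {M N : Type*} [Lfeq.Structure M] [Lfeq.Structure N] (hM : IsFeqStructure M)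
    (hN : IsFeqStructure N) (f : M → N) (hf : Function.Injective f)
    (hP : ∀ x, feqP (f x) ↔ feqP x) (hE : ∀ x y, feqE (f x) (f y) ↔ feqE x y)
    (hF : ∀ x y, f (feqF x y) = feqF (f x) (f y)) : M ↪[Lfeq] N where
  toFun := f
  inj' := hf
  map_fun' {n} g v := by
    rw [← FinVec.map_eq, ← FinVec.etaExpand_eq v]
    cases g
    exact hF _ _
  map_rel' {n} s v := by
    rw [← FinVec.map_eq, ← FinVec.etaExpand_eq v]
    cases s
    case P => exact hP _
    case Q => exact hN.feqQ_iff_not_feqP.trans ((hP _).not.trans hM.feqQ_iff_not_feqP.symm)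
    case E => exact hE _ _
    case R =>
      change feqR (f (v 0)) (f (v 1)) ↔ feqR (v 0) (v 1)
      rw [hN.feqR_iff, hM.feqR_iff, hN.feqQ_iff_not_feqP, hM.feqQ_iff_not_feqP, hP, hP, ← hF,
        hf.eq_iff]

variable {M N : Type*} [Lfeq.Structure M] [Lfeq.Structure N] (f : M ↪[Lfeq] N) {x y : M}

lemma feqP_map : feqP (f x) ↔ feqP x := by
  simpa only [← FinVec.map_eq] using! f.map_rel FeqRel.P ![x]

lemma feqE_map : feqE (f x) (f y) ↔ feqE x y := by
  simpa only [← FinVec.map_eq] using! f.map_rel FeqRel.E ![x, y]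

lemma feqF_map : f (feqF x y) = feqF (f x) (f y) := by
  simpa only [← FinVec.map_eq] using! f.map_fun FeqFunc.F ![x, y]

end Embedding

/-- Data for gluing `T_feq`-structures `N i` along partial isomorphisms, encoded as an equivalence
relation on their disjoint union. -/
structure GlueData {ι : Type*} (N : ι → Type*) [∀ i, Lfeq.Structure (N i)] extends
    Setoid (Σ i, N i) where
  isFeqStructure (i : ι) : IsFeqStructure (N i)
  eq_of_rel {i : ι} {x y : N i} (h : r ⟨i, x⟩ ⟨i, y⟩) : x = y
  feqP_iff {i j : ι} {x : N i} {y : N j} (h : r ⟨i, x⟩ ⟨j, y⟩) : feqP x ↔ feqP y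
  feqE_of_rel {i j : ι} {x x' : N i} {y y' : N j} (h : r ⟨i, x⟩ ⟨j, y⟩) (h' : r ⟨i, x'⟩ ⟨j, y'⟩)
    (hE : feqE x x') : feqE y y'
  rel_feqF {i j : ι} {x x' : N i} {y y' : N j} (h : r ⟨i, x⟩ ⟨j, y⟩) (h' : r ⟨i, x'⟩ ⟨j, y'⟩) :
    r ⟨i, feqF x x'⟩ ⟨j, feqF y y'⟩
  /-- Elements of `N i` and `N k` that become equivalent through `N j` do so through an element
  common to all three; this is what makes `E` transitive on the glued structure. -/
  exists_common {i j k : ι} {x : N i} {y y' : N j} {z : N k} (h : r ⟨i, x⟩ ⟨j, y⟩)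
    (h' : r ⟨j, y'⟩ ⟨k, z⟩) (hE : feqE y y') :
    ∃ x₀ y₀ z₀, r ⟨i, x₀⟩ ⟨j, y₀⟩ ∧ r ⟨j, y₀⟩ ⟨k, z₀⟩ ∧ feqE y y₀

namespace GlueData

universe u v

variable {ι : Type u} {N : ι → Type v} [∀ i, Lfeq.Structure (N i)] (G : GlueData N)

/-- The equivalence relation generated on the disjoint union by `E` and the identifications. -/
def CopyE (a b : Σ i, N i) : Prop :=
  ∃ x y, feqE a.2 x ∧ G.r ⟨a.1, x⟩ ⟨b.1, y⟩ ∧ feqE y b.2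

variable {G}

lemma copyE_symm {a b : Σ i, N i} : G.CopyE a b → G.CopyE b a := by
  rintro ⟨x, y, hax, hxy, hyb⟩
  exact ⟨y, x, (G.isFeqStructure _).feqE_symm hyb, G.symm hxy,
    (G.isFeqStructure _).feqE_symm hax⟩

lemma copyE_trans {a b c : Σ i, N i} : G.CopyE a b → G.CopyE b c → G.CopyE a c := by
  rintro ⟨x, y, hax, hxy, hyb⟩ ⟨y', z, hby', hyz, hzc⟩
  have hyy' := (G.isFeqStructure _).feqE_trans hyb hby'
  obtain ⟨x₀, y₀, z₀, hxy₀, hyz₀, hyy₀⟩ := G.exists_common hxy hyz hyy'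
  refine ⟨x₀, z₀, (G.isFeqStructure _).feqE_trans hax ?_, G.trans hxy₀ hyz₀,
    (G.isFeqStructure _).feqE_trans ?_ hzc⟩
  · exact G.feqE_of_rel (G.symm hxy) (G.symm hxy₀) hyy₀
  · exact G.feqE_of_rel hyz₀ hyz ((G.isFeqStructure _).feqE_trans
      ((G.isFeqStructure _).feqE_symm hyy₀) hyy')

lemma copyE_of_rel {a b : Σ i, N i} (h : G.r a b) (ha : feqQ a.2) : G.CopyE a b :=
  have hb : feqQ b.2 := by
    rw [(G.isFeqStructure _).feqQ_iff_not_feqP] at ha ⊢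
    rwa [← G.feqP_iff h]
  ⟨a.2, b.2, (G.isFeqStructure _).feqE_refl ha, h, (G.isFeqStructure _).feqE_refl hb⟩

lemma feqQ_of_copyE {a b : Σ i, N i} : G.CopyE a b → feqQ a.2 ∧ feqQ b.2 := by
  rintro ⟨x, y, hax, -, hyb⟩
  exact ⟨((G.isFeqStructure _).feqQ_of_feqE hax).1, ((G.isFeqStructure _).feqQ_of_feqE hyb).2⟩

lemma copyE_congr {a a' b b' : Σ i, N i} (ha : G.r a a') (hb : G.r b b') (h : G.CopyE a b) :
    G.CopyE a' b' :=
  have ⟨haQ, hbQ⟩ := feqQ_of_copyE h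
  copyE_trans (copyE_symm (copyE_of_rel ha haQ)) (copyE_trans h (copyE_of_rel hb hbQ))

lemma copyE_same_iff {i : ι} {x y : N i} : G.CopyE ⟨i, x⟩ ⟨i, y⟩ ↔ feqE x y := by
  constructor
  · rintro ⟨x', y', hx, h, hy⟩
    obtain rfl := G.eq_of_rel h
    exact (G.isFeqStructure i).feqE_trans hx hy
  · intro h
    exact ⟨x, x, (G.isFeqStructure i).feqE_refl ((G.isFeqStructure i).feqQ_of_feqE h).1,
      G.refl _, h⟩

variable (G)

/-- The universe of the glued structure. -/
def Carrier : Type (max u v) := Quotient G.toSetoid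

variable {G} in
/-- The canonical map of the `i`-th structure into the glued one. -/
def incl (i : ι) (x : N i) : G.Carrier := Quotient.mk G.toSetoid ⟨i, x⟩

variable {G} in
lemma incl_eq_incl_iff {i j : ι} {x : N i} {y : N j} :
    G.incl i x = G.incl j y ↔ G.r ⟨i, x⟩ ⟨j, y⟩ := Quotient.eq

variable {G} in
lemma exists_eq_incl (d : G.Carrier) : ∃ i x, d = G.incl i x := by
  obtain ⟨⟨i, x⟩, rfl⟩ := Quotient.exists_rep d
  exact ⟨i, x, rfl⟩

/-- The predicate `P` of the glued structure. -/
def gluedP : G.Carrier → Prop :=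
  Quotient.lift (fun a => feqP a.2) fun _ _ h => propext (G.feqP_iff h)

/-- The equivalence relation `E` of the glued structure. -/
def gluedE : G.Carrier → G.Carrier → Prop :=
  Quotient.lift₂ G.CopyE fun _ _ _ _ ha hb =>
    propext ⟨copyE_congr ha hb, copyE_congr (G.symm ha) (G.symm hb)⟩

/-- `d₁` and `d₂` must have the same value under `F(·, d')`. -/
def SameFiber (d' d₁ d₂ : G.Carrier) : Prop := d₁ = d₂ ∨ G.gluedP d' ∧ G.gluedE d₁ d₂

/-- The copies force `F(d, d') = w` in the glued structure. -/
def ForcedF (d d' w : G.Carrier) : Prop :=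
  ∃ i x z, d' = G.incl i z ∧ w = G.incl i (feqF x z) ∧ G.SameFiber d' d (G.incl i x)

open Classical in
/-- The function `F` of the glued structure; where no value is forced, any choice depending only
on the `E`-class of the first argument will do. -/
noncomputable def gluedF (d d' : G.Carrier) : G.Carrier :=
  if ∃ w, G.ForcedF d d' w then @epsilon _ ⟨d⟩ (G.ForcedF d d') else @epsilon _ ⟨d⟩ (G.gluedE d)

variable {G}

lemma gluedE_incl_iff {i : ι} {x y : N i} : G.gluedE (G.incl i x) (G.incl i y) ↔ feqE x y :=
  copyE_same_iff

lemma gluedE_symm {d₁ d₂ : G.Carrier} : G.gluedE d₁ d₂ → G.gluedE d₂ d₁ :=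
  Quotient.inductionOn₂ d₁ d₂ fun _ _ => copyE_symm

lemma gluedE_trans {d₁ d₂ d₃ : G.Carrier} :
    G.gluedE d₁ d₂ → G.gluedE d₂ d₃ → G.gluedE d₁ d₃ :=
  Quotient.inductionOn₃ d₁ d₂ d₃ fun _ _ _ => copyE_trans

lemma not_gluedP_of_gluedE {d₁ d₂ : G.Carrier} :
    G.gluedE d₁ d₂ → ¬ G.gluedP d₁ ∧ ¬ G.gluedP d₂ :=
  Quotient.inductionOn₂ d₁ d₂ fun _ _ h =>
    (feqQ_of_copyE h).imp (G.isFeqStructure _).feqQ_iff_not_feqP.1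
      (G.isFeqStructure _).feqQ_iff_not_feqP.1

lemma gluedE_refl {d : G.Carrier} (hd : ¬ G.gluedP d) : G.gluedE d d := by
  obtain ⟨i, x, rfl⟩ := exists_eq_incl d
  exact gluedE_incl_iff.2 <|
    (G.isFeqStructure i).feqE_refl ((G.isFeqStructure i).feqQ_iff_not_feqP.2 hd)

lemma SameFiber.symm {d' d₁ d₂ : G.Carrier} (h : G.SameFiber d' d₁ d₂) : G.SameFiber d' d₂ d₁ :=
  h.imp Eq.symm (And.imp_right gluedE_symm)

lemma SameFiber.trans {d' d₁ d₂ d₃ : G.Carrier} (h₁₂ : G.SameFiber d' d₁ d₂)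
    (h₂₃ : G.SameFiber d' d₂ d₃) : G.SameFiber d' d₁ d₃ := by
  rcases h₁₂ with rfl | ⟨hP, h₁₂⟩
  · exact h₂₃
  · rcases h₂₃ with rfl | ⟨-, h₂₃⟩
    · exact .inr ⟨hP, h₁₂⟩
    · exact .inr ⟨hP, gluedE_trans h₁₂ h₂₃⟩

lemma forcedF_unique {d d' w₁ w₂ : G.Carrier} (h₁ : G.ForcedF d d' w₁)
    (h₂ : G.ForcedF d d' w₂) : w₁ = w₂ := by
  obtain ⟨i, x, z, rfl, rfl, hx⟩ := h₁
  obtain ⟨j, y, u, hzu, rfl, hy⟩ := h₂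
  have hr := incl_eq_incl_iff.1 hzu
  rw [incl_eq_incl_iff]
  rcases hx.symm.trans hy with h | ⟨hP, x', y', hxx', hxy', hyy'⟩
  · exact G.rel_feqF (incl_eq_incl_iff.1 h) hr
  · rw [(G.isFeqStructure i).feqF_congr hP hxx',
      ← (G.isFeqStructure j).feqF_congr ((G.feqP_iff hr).1 hP) hyy']
    exact G.rel_feqF hxy' hr

lemma gluedF_eq_of_forcedF {d d' w : G.Carrier} (h : G.ForcedF d d' w) : G.gluedF d d' = w := by
  have hex : ∃ w, G.ForcedF d d' w := ⟨w, h⟩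
  rw [gluedF, if_pos hex]
  exact forcedF_unique (Classical.epsilon_spec hex) h

lemma gluedF_incl {i : ι} {x z : N i} :
    G.gluedF (G.incl i x) (G.incl i z) = G.incl i (feqF x z) :=
  gluedF_eq_of_forcedF ⟨i, x, z, rfl, rfl, .inl rfl⟩

lemma gluedF_congr {d₁ d₂ d' : G.Carrier} (hd' : G.gluedP d') (h : G.gluedE d₁ d₂) :
    G.gluedF d₁ d' = G.gluedF d₂ d' := by
  have same : G.SameFiber d' d₁ d₂ := .inr ⟨hd', h⟩
  have hE : G.gluedE d₁ = G.gluedE d₂ := funext fun w =>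
    propext ⟨gluedE_trans (gluedE_symm h), gluedE_trans h⟩
  have hF : G.ForcedF d₁ d' = G.ForcedF d₂ d' := funext fun w =>
    propext ⟨fun ⟨i, x, z, hz, hw, hx⟩ => ⟨i, x, z, hz, hw, same.symm.trans hx⟩,
      fun ⟨i, x, z, hz, hw, hx⟩ => ⟨i, x, z, hz, hw, same.trans hx⟩⟩
  rw [gluedF, gluedF, hE, hF]

lemma gluedE_gluedF {d d' : G.Carrier} (hd : ¬ G.gluedP d) (hd' : G.gluedP d') :
    G.gluedE d (G.gluedF d d') := by
  by_cases h : ∃ w, G.ForcedF d d' w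
  · obtain ⟨w, hw⟩ := h
    rw [gluedF_eq_of_forcedF hw]
    obtain ⟨i, x, z, rfl, rfl, hx⟩ := hw
    have hdx : G.gluedE d (G.incl i x) := by
      rcases hx with rfl | ⟨-, hx⟩
      exacts [gluedE_refl hd, hx]
    have hQ : feqQ x := (G.isFeqStructure i).feqQ_iff_not_feqP.2 (not_gluedP_of_gluedE hdx).2
    exact gluedE_trans hdx (gluedE_incl_iff.2 ((G.isFeqStructure i).feqE_feqF hQ hd'))
  · rw [gluedF, if_neg h]
    exact Classical.epsilon_spec ⟨d, gluedE_refl hd⟩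

noncomputable instance : Lfeq.Structure G.Carrier :=
  mkFeqStructure G.gluedP (fun d => ¬ G.gluedP d) G.gluedE
    (fun d d' => ¬ G.gluedP d ∧ G.gluedP d' ∧ G.gluedF d d' = d) G.gluedF

variable (G) in
lemma isFeqStructure_carrier : IsFeqStructure G.Carrier := by
  refine ⟨fun d => em (G.gluedP d), fun d => and_not_self, fun d₁ d₂ => not_gluedP_of_gluedE,
    fun d => gluedE_refl, fun d₁ d₂ => gluedE_symm, fun d₁ d₂ d₃ => gluedE_trans,
    fun d d' h => ⟨h.1, h.2.1⟩, fun d₁ d₂ d' h₁ h₂ h => ?_, fun d d' hd hd' => ?_⟩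
  · exact h₁.2.2.symm.trans ((gluedF_congr h₁.2.1 h).trans h₂.2.2)
  · have hE := gluedE_gluedF hd hd'
    have hQ := (not_gluedP_of_gluedE hE).2
    exact ⟨hQ, ⟨hQ, hd', (gluedF_congr hd' hE).symm⟩, hE⟩

variable (G) in
/-- The canonical map `incl i` as an embedding. -/
noncomputable def inclEmbedding (i : ι) : N i ↪[Lfeq] G.Carrier :=
  feqEmbedding (G.isFeqStructure i) G.isFeqStructure_carrier (G.incl i)
    (fun _ _ h => G.eq_of_rel (incl_eq_incl_iff.1 h)) (fun _ => Iff.rfl)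
    (fun _ _ => gluedE_incl_iff) fun _ _ => gluedF_incl.symm

lemma inclEmbedding_eq_of_rel {i j : ι} {x : N i} {y : N j} (h : G.r ⟨i, x⟩ ⟨j, y⟩) :
    G.inclEmbedding i x = G.inclEmbedding j y :=
  incl_eq_incl_iff.2 h

end GlueData

section Independence

variable {N : Type*}

/-- Independence of `A` and `B` over `C` with respect to an equivalence relation `r`: the
`r`-classes meeting both `A` and `B` meet `C`. -/
def RelIndep (r : N → N → Prop) (C A B : Set N) : Prop :=
  ∀ x ∈ A, ∀ y ∈ B, r x y → ∃ z ∈ C, r x z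

lemma RelIndep.symm {r : N → N → Prop} (hsymm : ∀ x y, r x y → r y x)
    (htrans : ∀ x y z, r x y → r y z → r x z) {C A B : Set N} (h : RelIndep r C A B) :
    RelIndep r C B A := fun y hy x hx hyx =>
  let ⟨z, hz, hxz⟩ := h x hx y hy (hsymm y x hyx)
  ⟨z, hz, htrans y x z hyx hxz⟩

variable [Lfeq.Structure N]

/-- Independence for `T_feq`: no new equality and no new `E`-equivalence between `A` and `B`. -/
def FeqIndep (C A B : Set N) : Prop := RelIndep (· = ·) C A B ∧ RelIndep feqE C A B

lemma FeqIndep.symm (hN : IsFeqStructure N) {C A B : Set N} (h : FeqIndep C A B) :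
    FeqIndep C B A :=
  ⟨h.1.symm (r := (· = ·)) (fun _ _ => Eq.symm) (fun _ _ _ => Eq.trans),
    h.2.symm (r := feqE) (fun _ _ => hN.feqE_symm) (fun _ _ _ => hN.feqE_trans)⟩

lemma FeqIndep.mono_left {C A A' B : Set N} (h : FeqIndep C A B) (hA : A' ⊆ A) :
    FeqIndep C A' B :=
  ⟨fun x hx => h.1 x (hA hx), fun x hx => h.2 x (hA hx)⟩

end Independence

/-- A triangle of `T_feq`-structures over `U`: vertices `V k`, and opposite to the vertex `V i` an
edge `N i` containing the other two vertices independently over `U`. -/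
structure FeqTriangle (U : Type*) (V N : Fin 3 → Type*) [Lfeq.Structure U]
    [∀ k, Lfeq.Structure (V k)] [∀ i, Lfeq.Structure (N i)] where
  isFeqStructure (i : Fin 3) : IsFeqStructure (N i)
  base (k : Fin 3) : U ↪[Lfeq] V k
  side {i k : Fin 3} (h : k ≠ i) : V k ↪[Lfeq] N i
  side_base {i k l : Fin 3} (hk : k ≠ i) (hl : l ≠ i) (u : U) :
    side hk (base k u) = side hl (base l u)
  indep {i k l : Fin 3} (hk : k ≠ i) (hl : l ≠ i) (hkl : k < l) :
    FeqIndep (Set.range (side hk ∘ base k)) (Set.range (side hk)) (Set.range (side hl))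

namespace FeqTriangle

variable {U : Type*} {V N : Fin 3 → Type*} [Lfeq.Structure U] [∀ k, Lfeq.Structure (V k)]
  [∀ i, Lfeq.Structure (N i)] (T : FeqTriangle U V N)

variable {T} in
lemma feqIndep {i k l : Fin 3} (hk : k ≠ i) (hl : l ≠ i) (hkl : k ≠ l) :
    FeqIndep (Set.range (T.side hk ∘ T.base k)) (Set.range (T.side hk))
      (Set.range (T.side hl)) := by
  rcases hkl.lt_or_gt with h | h
  · exact T.indep hk hl h
  · rw [show T.side hk ∘ T.base k = T.side hl ∘ T.base l from funext (T.side_base hk hl)]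
    exact (T.indep hl hk h).symm (T.isFeqStructure i)

/-- Two elements of edges are identified if they come from the same element of a common vertex. -/
def Identified {i j : Fin 3} (x : N i) (y : N j) : Prop :=
  ∃ (k : Fin 3) (hi : k ≠ i) (hj : k ≠ j) (v : V k), T.side hi v = x ∧ T.side hj v = y

lemma identified_base {i j k l : Fin 3} (hk : k ≠ i) (hl : l ≠ j) (u : U) :
    T.Identified (T.side hk (T.base k u)) (T.side hl (T.base l u)) := by
  obtain ⟨m, hi, hj⟩ : ∃ m : Fin 3, m ≠ i ∧ m ≠ j := by decide +revert
  exact ⟨m, hi, hj, T.base m u, T.side_base hi hk u, T.side_base hj hl u⟩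

variable {T}

lemma Identified.symm {i j : Fin 3} {x : N i} {y : N j} : T.Identified x y → T.Identified y x :=
  fun ⟨k, hi, hj, v, hx, hy⟩ => ⟨k, hj, hi, v, hy, hx⟩

lemma Identified.eq {i : Fin 3} {x y : N i} : T.Identified x y → x = y :=
  fun ⟨_, _, _, _, hx, hy⟩ => hx.symm.trans hy

lemma Identified.trans {i j l : Fin 3} {x : N i} {y : N j} {z : N l} :
    T.Identified x y → T.Identified y z → T.Identified x z := by
  rintro ⟨k, hi, hj, v, rfl, rfl⟩ ⟨k', hj', hl', v', hv, rfl⟩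
  rcases eq_or_ne k k' with rfl | hk
  · obtain rfl := (T.side hj).injective hv
    exact ⟨k, hi, hl', _, rfl, rfl⟩
  · obtain ⟨-, ⟨u, rfl⟩, hu⟩ := (feqIndep hj hj' hk).1 _ ⟨v, rfl⟩ _ ⟨v', rfl⟩ hv.symm
    obtain rfl := (T.side hj).injective hu
    rw [T.side_base hj hj', (T.side hj').injective.eq_iff] at hv
    exact hv ▸ T.identified_base _ _ u

lemma Identified.exists_common_vertex {i j : Fin 3} (hij : i ≠ j) {x x' : N i} {y y' : N j} :
    T.Identified x y → T.Identified x' y' → ∃ (k : Fin 3) (hi : k ≠ i) (hj : k ≠ j) (v v' : V k),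
      x = T.side hi v ∧ x' = T.side hi v' ∧ y = T.side hj v ∧ y' = T.side hj v' := by
  rintro ⟨k, hi, hj, v, rfl, rfl⟩ ⟨k', hi', hj', v', rfl, rfl⟩
  obtain rfl : k = k' := by decide +revert
  exact ⟨k, hi, hj, v, v', rfl, rfl, rfl, rfl⟩

/-- The identifications, made reflexive, as an equivalence relation on the edges. -/
def Rel (T : FeqTriangle U V N) (a b : Σ i, N i) : Prop := a = b ∨ T.Identified a.2 b.2

lemma Rel.eq {i : Fin 3} {x y : N i} : T.Rel ⟨i, x⟩ ⟨i, y⟩ → x = y := by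
  rintro (h | h)
  exacts [eq_of_heq (Sigma.mk.inj h).2, h.eq]

lemma Rel.identified {i j : Fin 3} (hij : i ≠ j) {x : N i} {y : N j} :
    T.Rel ⟨i, x⟩ ⟨j, y⟩ → T.Identified x y :=
  fun h => h.resolve_left fun h => hij (Sigma.mk.inj h).1

lemma rel_equivalence : Equivalence T.Rel where
  refl _ := .inl rfl
  symm h := h.imp Eq.symm Identified.symm
  trans := by
    rintro a b c (rfl | hab) (rfl | hbc)
    exacts [.inl rfl, .inr hbc, .inr hab, .inr (hab.trans hbc)]

lemma Rel.feqP_iff {i j : Fin 3} {x : N i} {y : N j} :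
    T.Rel ⟨i, x⟩ ⟨j, y⟩ → (feqP x ↔ feqP y) := by
  rintro (⟨⟨⟩⟩ | h)
  · rfl
  · obtain ⟨k, hi, hj, v, rfl, rfl⟩ : T.Identified x y := h
    rw [feqP_map, feqP_map]

lemma Rel.feqE_of_feqE {i j : Fin 3} {x x' : N i} {y y' : N j} (h : T.Rel ⟨i, x⟩ ⟨j, y⟩)
    (h' : T.Rel ⟨i, x'⟩ ⟨j, y'⟩) (hE : feqE x x') : feqE y y' := by
  rcases eq_or_ne i j with rfl | hij
  · rwa [← h.eq, ← h'.eq]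
  · obtain ⟨k, hi, hj, v, v', rfl, rfl, rfl, rfl⟩ :=
      (h.identified hij).exists_common_vertex hij (h'.identified hij)
    rwa [feqE_map] at hE ⊢

lemma Rel.rel_feqF {i j : Fin 3} {x x' : N i} {y y' : N j} (h : T.Rel ⟨i, x⟩ ⟨j, y⟩)
    (h' : T.Rel ⟨i, x'⟩ ⟨j, y'⟩) : T.Rel ⟨i, feqF x x'⟩ ⟨j, feqF y y'⟩ := by
  rcases eq_or_ne i j with rfl | hij
  · rw [h.eq, h'.eq]
    exact .inl rfl
  · obtain ⟨k, hi, hj, v, v', rfl, rfl, rfl, rfl⟩ :=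
      (h.identified hij).exists_common_vertex hij (h'.identified hij)
    exact .inr ⟨k, hi, hj, feqF v v', feqF_map _, feqF_map _⟩

lemma Identified.exists_common {i j l : Fin 3} {x : N i} {y y' : N j} {z : N l} :
    T.Identified x y → T.Identified y' z → feqE y y' →
    ∃ x₀ y₀ z₀, T.Identified (i := i) (j := j) x₀ y₀ ∧ T.Identified (j := l) y₀ z₀ ∧
      feqE y y₀ := by
  rintro ⟨k, hi, hj, v, rfl, rfl⟩ ⟨k', hj', hl', v', rfl, rfl⟩ hE
  rcases eq_or_ne k k' with rfl | hk
  · exact ⟨_, _, _, ⟨k, hi, hj, v, rfl, rfl⟩, ⟨k, hj, hl', v, rfl, rfl⟩,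
      (T.isFeqStructure j).feqE_refl ((T.isFeqStructure j).feqQ_of_feqE hE).1⟩
  · obtain ⟨-, ⟨u, rfl⟩, hu⟩ := (feqIndep hj hj' hk).2 _ ⟨v, rfl⟩ _ ⟨v', rfl⟩ hE
    exact ⟨_, _, _, T.identified_base hi hj u, T.identified_base hj hl' u, hu⟩

variable (T) in
/-- The gluing data identifying the edges along their common vertices. -/
def glueData : GlueData N where
  r := T.Rel
  iseqv := rel_equivalence
  isFeqStructure := T.isFeqStructure
  eq_of_rel := Rel.eq
  feqP_iff := Rel.feqP_iff
  feqE_of_rel := Rel.feqE_of_feqE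
  rel_feqF := Rel.rel_feqF
  exists_common {i j l x y y' z} h h' hE := by
    have hy := (T.isFeqStructure j).feqE_refl ((T.isFeqStructure j).feqQ_of_feqE hE).1
    rcases h with ⟨⟨⟩⟩ | h
    · exact ⟨y', y', z, .inl rfl, h', hE⟩
    · rcases h' with ⟨⟨⟩⟩ | h'
      · exact ⟨x, y, y, .inr h, .inl rfl, hy⟩
      · obtain ⟨x₀, y₀, z₀, hxy₀, hyz₀, hyy₀⟩ := h.exists_common h' hE
        exact ⟨x₀, y₀, z₀, .inr hxy₀, .inr hyz₀, hyy₀⟩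

lemma inclEmbedding_side {i j k : Fin 3} (hi : k ≠ i) (hj : k ≠ j) (v : V k) :
    T.glueData.inclEmbedding i (T.side hi v) = T.glueData.inclEmbedding j (T.side hj v) :=
  GlueData.inclEmbedding_eq_of_rel (.inr ⟨k, hi, hj, v, rfl, rfl⟩)

end FeqTriangle

universe u in
/-- If `A` is independent from `B` and from `D`, and a copy `τ B` of `B` is independent from `D`,
then `A`, `B`, `D` can be rearranged so that `A` stands in its old position to `B` and to `D`
while `B` stands to `D` as `τ B` does. -/
lemma FeqIndep.exists_amalgam {N : Type u} [Lfeq.Structure N] (hN : IsFeqStructure N)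
    {C A B D : Lfeq.Substructure N} (hCA : C ≤ A) (hCB : C ≤ B) (hCD : C ≤ D) (τ : B ↪[Lfeq] N)
    (hτ : ∀ c (hc : c ∈ C), τ ⟨c, hCB hc⟩ = c) (hAB : FeqIndep (C : Set N) A B)
    (hAD : FeqIndep (C : Set N) A D) (hBD : FeqIndep (C : Set N) (Set.range τ) D) :
    ∃ (M : Type u) (_ : Lfeq.Structure M) (f₀ f₁ f₂ : N ↪[Lfeq] M), IsFeqStructure M ∧
      (∀ a ∈ A, f₁ a = f₂ a) ∧ (∀ d ∈ D, f₀ d = f₁ d) ∧ ∀ b : B, f₀ (τ b) = f₂ b := by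
  let S : Fin 3 → Lfeq.Substructure N := ![A, B, D]
  have hS : ∀ k, C ≤ S k := by simpa only [Fin.forall_fin_succ] using! ⟨hCA, hCB, hCD, nofun⟩
  let side : Fin 3 → ∀ k : Fin 3, S k ↪[Lfeq] N
    | 0, 1 => τ
    | _, k => (S k).subtype
  have side_base : ∀ i k (u : C), side i k (Substructure.inclusion (hS k) u) = u := by
    intro i k u
    fin_cases i <;> fin_cases k <;> first | rfl | exact hτ u u.2
  have range_base (i k) : Set.range (side i k ∘ Substructure.inclusion (hS k)) = C :=
    (congrArg Set.range (funext (side_base i k))).trans Subtype.range_coe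
  have range_coe (A : Lfeq.Substructure N) : Set.range A.subtype = A := Subtype.range_coe
  let T : FeqTriangle C (fun k => S k) (fun _ => N) :=
    { isFeqStructure _ := hN
      base k := Substructure.inclusion (hS k)
      side {i k} _ := side i k
      side_base _ _ u := by rw [side_base, side_base]
      indep {i k l} hk hl hkl := by
        rw [range_base]
        obtain ⟨rfl, rfl, rfl⟩ | ⟨rfl, rfl, rfl⟩ | ⟨rfl, rfl, rfl⟩ :
            i = 0 ∧ k = 1 ∧ l = 2 ∨ i = 1 ∧ k = 0 ∧ l = 2 ∨ i = 2 ∧ k = 0 ∧ l = 1 := by omega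
        exacts [(range_coe D).symm ▸ hBD, (range_coe A).symm ▸ (range_coe D).symm ▸ hAD,
          (range_coe A).symm ▸ (range_coe B).symm ▸ hAB] }
  refine ⟨T.glueData.Carrier, inferInstance, T.glueData.inclEmbedding 0, T.glueData.inclEmbedding 1,
    T.glueData.inclEmbedding 2, T.glueData.isFeqStructure_carrier, fun a ha => ?_, fun d hd => ?_,
    fun b => ?_⟩
  · exact T.inclEmbedding_side (by decide : (0 : Fin 3) ≠ 1) (by decide : (0 : Fin 3) ≠ 2) ⟨a, ha⟩
  · exact T.inclEmbedding_side (by decide : (2 : Fin 3) ≠ 0) (by decide : (2 : Fin 3) ≠ 1) ⟨d, hd⟩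
  · exact T.inclEmbedding_side (by decide : (1 : Fin 3) ≠ 0) (by decide : (1 : Fin 3) ≠ 2) b

section Generated

variable {α N : Type*} [L.Structure N]

lemma mem_closure_range_iff {v : α → M} {x : M} :
    x ∈ Substructure.closure L (Set.range v) ↔ ∃ t : L.Term α, t.realize v = x := by
  constructor
  · rw [Substructure.mem_closure_iff_exists_term]
    rintro ⟨t, rfl⟩
    refine ⟨t.relabel fun y => y.2.choose, ?_⟩
    rw [Term.realize_relabel]
    exact congrArg t.realize (funext fun y => y.2.choose_spec)
  · rintro ⟨t, rfl⟩
    induction t with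
    | var i => exact Substructure.subset_closure (Set.mem_range_self i)
    | func g _ ih => exact Substructure.fun_mem _ g _ ih

/-- Tuples with the same type generate isomorphic substructures. -/
lemma exists_closure_embedding {v : α → M} {w : α → N}
    (h : ∀ ψ : L.Formula α, ψ.Realize v ↔ ψ.Realize w) :
    ∃ f : Substructure.closure L (Set.range v) ↪[L] N,
      ∀ (t : L.Term α) (x : Substructure.closure L (Set.range v)),
        t.realize v = x → f x = t.realize w := by
  choose t ht using fun x : Substructure.closure L (Set.range v) => mem_closure_range_iff.1 x.2
  have realize_eq_iff (s₁ s₂ : L.Term α) :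
      s₁.realize v = s₂.realize v ↔ s₁.realize w = s₂.realize w := by
    simpa only [Formula.realize_equal] using h (s₁.equal s₂)
  have realize_rep (s : L.Term α) (x : Substructure.closure L (Set.range v))
      (hs : s.realize v = x) : (t x).realize w = s.realize w :=
    (realize_eq_iff _ _).1 ((ht x).trans hs.symm)
  have map_fun {n} (g : L.Functions n) (x : Fin n → Substructure.closure L (Set.range v)) :
      (t (Structure.funMap g x)).realize w = Structure.funMap g fun i => (t (x i)).realize w :=
    realize_rep (Term.func g fun i => t (x i)) _
      (congrArg (Structure.funMap g) (funext fun i => ht (x i)))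
  have map_rel {n} (r : L.Relations n) (x : Fin n → Substructure.closure L (Set.range v)) :
      Structure.RelMap r (fun i => (t (x i)).realize w) ↔
        Structure.RelMap r fun i => (x i : M) := by
    simpa only [Formula.realize_rel, ht] using (h (r.formula fun i => t (x i))).symm
  exact ⟨{ toFun x := (t x).realize w
           inj' x y hxy := Subtype.ext <| by rwa [← ht x, ← ht y, realize_eq_iff]
           map_fun' := map_fun
           map_rel' := map_rel }, realize_rep⟩

end Generated

section Ultrafilter

open Filter

variable {ι κ : Type*}

lemma exists_forall_mem_of_mem_curry [LinearOrder κ] {l : Filter ι} [l.NeBot] {A : Set (ι × ι)}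
    (hA : A ∈ l.curry l) (T : Finset κ) :
    ∃ σ : κ → ι, ∀ p ∈ T, ∀ q, p < q → (σ p, σ q) ∈ A := by
  obtain ⟨g, -, hg⟩ := exists_seq_of_forall_finset_exists (fun n => ∀ᶠ m in l, (n, m) ∈ A)
    (fun n m => (n, m) ∈ A) fun s hs =>
      ((mem_curry_iff.1 hA).and ((eventually_all_finset s).2 hs)).exists
  refine ⟨fun p => g (T.filter (· < p)).card, fun p hp q hpq => hg _ _ (Finset.card_lt_card ?_)⟩
  rw [Finset.ssubset_iff_of_subset fun r hr => ?_]
  · exact ⟨p, Finset.mem_filter.2 ⟨hp, hpq⟩, fun h => lt_irrefl p (Finset.mem_filter.1 h).2⟩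
  · rw [Finset.mem_filter] at hr ⊢
    exact ⟨hr.1, hr.2.trans hpq⟩

/-- Along the resulting ultrafilter, `σ` is an iterated limit along `l`: smaller indices are sent to
infinity first. -/
lemma exists_ultrafilter_tendsto_curry (l : Filter ι) [l.NeBot] (κ : Type*) [LinearOrder κ] :
    ∃ V : Ultrafilter (κ → ι), ∀ p q, p < q →
      Tendsto (fun σ : κ → ι => (σ p, σ q)) V (l.curry l) := by
  let S (i : Finset κ × {A // A ∈ l.curry l}) : Set (κ → ι) :=
    {σ | ∀ p ∈ i.1, ∀ q, p < q → (σ p, σ q) ∈ i.2.1}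
  have hS_nonempty (i) : (S i).Nonempty := exists_forall_mem_of_mem_curry i.2.2 i.1
  have hS_directed : Directed (· ≥ ·) (fun i => 𝓟 (S i)) := fun i j => by
    refine ⟨(i.1 ∪ j.1, ⟨_, inter_mem i.2.2 j.2.2⟩), principal_mono.2 ?_, principal_mono.2 ?_⟩
    · exact fun σ hσ p hp q hpq => (hσ p (Finset.mem_union_left _ hp) q hpq).1
    · exact fun σ hσ p hp q hpq => (hσ p (Finset.mem_union_right _ hp) q hpq).2
  have : Nonempty (Finset κ × {A // A ∈ l.curry l}) := ⟨∅, Set.univ, univ_mem⟩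
  have : (⨅ i, 𝓟 (S i)).NeBot :=
    iInf_neBot_of_directed' hS_directed fun i => principal_neBot_iff.2 (hS_nonempty i)
  refine ⟨Ultrafilter.of (⨅ i, 𝓟 (S i)), fun p q hpq A hA => Ultrafilter.of_le _ ?_⟩
  exact mem_iInf_of_mem ({p}, ⟨A, hA⟩) fun σ hσ => hσ p (Finset.mem_singleton_self p) q hpq

lemma eventually_comp_iff_of_tendsto {V : Ultrafilter κ} {U : Ultrafilter ι} {f : κ → ι}
    (hf : Tendsto f V U) {p : ι → Prop} : (∀ᶠ x in V, p (f x)) ↔ ∀ᶠ y in U, p y := by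
  have hmap : V.map f = U := Ultrafilter.coe_le_coe.1 hf
  rw [← hmap, Ultrafilter.coe_map, eventually_map]

end Ultrafilter

section Tree

lemma exists_sibling_realizing_same {κ : Type*} [Finite κ] (pr : κ → List Bool → Prop)
    (ξ : List Bool) :
    ∃ μ η, ξ <+: η ∧ μ ++ [false] <+: η ∧ ∀ k, pr k η ↔ pr k (μ ++ [true]) := by
  let spine (α : ℕ) : List Bool := ξ ++ List.replicate α false
  obtain ⟨α, -, α', -, hlt, heq⟩ := Set.infinite_univ.exists_lt_map_eq_of_mapsTo
    (f := fun α k => pr k (spine α ++ [true])) (Set.mapsTo_univ _ Set.univ) Set.finite_univ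
  refine ⟨spine α, spine α' ++ [true], ?_, ?_, fun k => (congrFun heq k).symm.to_iff⟩
  · exact (List.prefix_append _ _).trans (List.prefix_append _ _)
  · refine .trans ?_ (List.prefix_append (spine α') [true])
    rw [List.append_assoc, List.prefix_append_right_inj, ← List.replicate_succ']
    exact ⟨List.replicate (α' - (α + 1)) false, by rw [← List.replicate_add]; congr 1; omega⟩

lemma exists_chain_realizing_same (pr : ℕ → List Bool → Prop) :
    ∃ η μ : ℕ → List Bool, (∀ n, η n <+: η (n + 1)) ∧ (∀ n, μ n ++ [false] <+: η n) ∧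
      ∀ n, ∀ k ≤ n, pr k (η n) ↔ pr k (μ n ++ [true]) := by
  choose μ η h_prefix h_left h_same using fun n =>
    exists_sibling_realizing_same fun k : Fin (n + 1) => pr k
  let ξ (n : ℕ) : List Bool := n.rec [] η
  exact ⟨fun n => η n (ξ n), fun n => μ n (ξ n), fun n => h_prefix (n + 1) (ξ (n + 1)),
    fun n => h_left n (ξ n), fun n k hk => h_same n (ξ n) ⟨k, Nat.lt_succ_of_le hk⟩⟩

lemma exists_restrict_eq {η : ℕ → List Bool} (h : ∀ n, η n <+: η (n + 1)) :
    ∃ ρ : ℕ → Bool, ∀ n, restrict ρ (η n).length = η n := by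
  classical
  have h_le {m n : ℕ} (hmn : m ≤ n) : η m <+: η n :=
    Nat.rel_of_forall_rel_succ_of_le (· <+: ·) h hmn
  have h_agree {m n k : ℕ} (hm : k < (η m).length) (hn : k < (η n).length) :
      (η m)[k] = (η n)[k] := by
    rcases le_total m n with hmn | hmn
    · exact (h_le hmn).getElem hm
    · exact ((h_le hmn).getElem hn).symm
  refine ⟨fun k => if hk : ∃ n, k < (η n).length then (η hk.choose)[k]'hk.choose_spec else false,
    fun n => List.ext_getElem (List.length_ofFn) fun k _ hk => ?_⟩
  have hk' : ∃ n, k < (η n).length := ⟨n, hk⟩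
  simp only [restrict, List.getElem_ofFn, dif_pos hk']
  exact h_agree hk'.choose_spec hk

lemma realize_incompatFormula {mx my : ℕ} {φ : L.Formula (Fin mx ⊕ Fin my)} {c d : Fin my → M} :
    (incompatFormula φ).Realize (Sum.elim c d) ↔
      ¬ ∃ e : Fin mx → M, φ.Realize (Sum.elim e c) ∧ φ.Realize (Sum.elim e d) := by
  rw [incompatFormula, Formula.realize_not, BoundedFormula.realize_exs]
  simp only [BoundedFormula.realize_inf, BoundedFormula.realize_relabel]
  refine not_congr (exists_congr fun e => and_congr (iff_of_eq ?_) (iff_of_eq ?_)) <;>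
  · refine congr (congrArg (BoundedFormula.Realize φ) (funext ?_)) (Subsingleton.elim _ _)
    rintro (i | i) <;> rfl

end Tree

section Array

open Filter

variable {mx my : ℕ} {φ : L.Formula (Fin mx ⊕ Fin my)}

lemma ExemplifiesSOP1.exists_sequence [Countable L.Symbols] (h : ExemplifiesSOP1 φ M) :
    ∃ (a : List Bool → Fin my → M) (e : Fin mx → M) (s : ℕ → Bool → List Bool),
      (∀ n, φ.Realize (Sum.elim e (a (s n false)))) ∧
      (∀ m n, m < n → ¬ ∃ x : Fin mx → M,
        φ.Realize (Sum.elim x (a (s n false))) ∧ φ.Realize (Sum.elim x (a (s m true)))) ∧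
      ∀ ψ : L.Formula ((List Bool × Fin my) ⊕ Fin my), ∀ᶠ n in atTop,
        (ψ.Realize (Sum.elim (fun w => a w.1 w.2) (a (s n false))) ↔
          ψ.Realize (Sum.elim (fun w => a w.1 w.2) (a (s n true)))) := by
  obtain ⟨a, h_branch, h_inc⟩ := h
  obtain ⟨f, hf⟩ := exists_surjective_nat (L.Formula ((List Bool × Fin my) ⊕ Fin my))
  obtain ⟨η, μ, h_chain, h_left, h_same⟩ := exists_chain_realizing_same fun k η =>
    (f k).Realize (Sum.elim (fun w => a w.1 w.2) (a η))
  obtain ⟨ρ, hρ⟩ := exists_restrict_eq h_chain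
  obtain ⟨e, he⟩ := h_branch ρ
  have h_le {m n : ℕ} (hmn : m ≤ n) : η m <+: η n :=
    Nat.rel_of_forall_rel_succ_of_le (· <+: ·) h_chain hmn
  refine ⟨a, e, fun n i => bif i then μ n ++ [true] else η n, fun n => ?_,
    fun m n hmn => h_inc _ _ ((h_left m).trans (h_le hmn.le)), fun ψ => ?_⟩
  · exact (hρ n).subst (motive := fun ν => φ.Realize (Sum.elim e (a ν))) (he (η n).length)
  obtain ⟨k, rfl⟩ := hf ψ
  exact eventually_atTop.2 ⟨k, fun n hkn => h_same n k hkn⟩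

/-- A linearly ordered array of pairs `(c p 0, c p 1)` witnessing SOP₁ of `φ` along the common
solution `e` of all `φ(x̄, c p 0)`. The two members of a pair have the same type over `b`, and the
type of a pair over `b` and any later one is finitely satisfiable in `b`. -/
structure IsCoheirArray {κ α : Type*} [LT κ] (φ : L.Formula (Fin mx ⊕ Fin my)) (b : α → M)
    (e : Fin mx → M) (c : κ → Bool → Fin my → M) : Prop where
  realize (p : κ) : φ.Realize (Sum.elim e (c p false))
  inconsistent {p q : κ} : p < q → ¬ ∃ x : Fin mx → M,
    φ.Realize (Sum.elim x (c q false)) ∧ φ.Realize (Sum.elim x (c p true))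
  realize_iff (p : κ) (ψ : L.Formula (α ⊕ Fin my)) :
    ψ.Realize (Sum.elim b (c p false)) ↔ ψ.Realize (Sum.elim b (c p true))
  coheir {p q : κ} (i j : Bool) (ψ : L.Formula (α ⊕ (Fin my ⊕ Fin my))) : p < q →
    ψ.Realize (Sum.elim b (Sum.elim (c p i) (c q j))) →
      ∃ a : Fin my → α, ψ.Realize (Sum.elim b (Sum.elim (b ∘ a) (c q j)))

/-- The tuple of an ultrapower represented by a family of tuples. -/
def ultraTuple {ι β : Type*} (V : Ultrafilter ι) (x : ι → β → M) (i : β) :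
    (V : Filter ι).Product fun _ => M :=
  ((fun σ => x σ i : ι → M) : (V : Filter ι).Product fun _ => M)

lemma realize_ultraTuple {ι β : Type*} [Nonempty M] {V : Ultrafilter ι} {ψ : L.Formula β}
    {x : ι → β → M} : ψ.Realize (ultraTuple V x) ↔ ∀ᶠ σ in V, ψ.Realize (x σ) :=
  Ultraproduct.realize_formula_cast ψ fun i σ => x σ i

lemma sumElim_ultraTuple {ι β γ : Type*} {V : Ultrafilter ι} {x : ι → β → M} {y : ι → γ → M} :
    Sum.elim (ultraTuple V x) (ultraTuple V y) = ultraTuple V fun σ => Sum.elim (x σ) (y σ) := by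
  ext (i | i) <;> rfl

lemma ExemplifiesSOP1.exists_isCoheirArray [Countable L.Symbols] {M : Type} [L.Structure M]
    [Nonempty M] (h : ExemplifiesSOP1 φ M) (κ : Type) [LinearOrder κ] [NoMaxOrder κ] :
    ∃ (N : Type) (_ : L.Structure N) (_ : Nonempty N) (b : List Bool × Fin my → N)
      (e : Fin mx → N) (c : κ → Bool → Fin my → N),
      (M ≅[L] N) ∧ IsCoheirArray φ b e c := by
  obtain ⟨a, e, s, h_real, h_inc, h_same⟩ := h.exists_sequence
  let U : Ultrafilter ℕ := hyperfilter ℕ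
  have hU : (U : Filter ℕ) ≤ atTop := Nat.hyperfilter_le_atTop
  obtain ⟨V, hV⟩ := exists_ultrafilter_tendsto_curry (U : Filter ℕ) κ
  have hV_fst (p : κ) : Tendsto (fun σ : κ → ℕ => σ p) V U :=
    have ⟨q, hpq⟩ := exists_gt p
    (tendsto_fst.mono_left curry_le_prod).comp (hV p q hpq)
  refine ⟨(V : Filter (κ → ℕ)).Product fun _ => M, inferInstance, inferInstance,
    ultraTuple V fun _ w => a w.1 w.2, ultraTuple V fun _ => e,
    fun p i => ultraTuple V fun σ => a (s (σ p) i), ?_, ?_⟩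
  · exact elementarilyEquivalent_iff.2 fun ψ =>
      ((Ultraproduct.sentence_realize ψ).trans eventually_const).symm
  refine ⟨fun p => ?_, fun {p q} hpq => ?_, fun p ψ => ?_, fun {p q} i j ψ hpq => ?_⟩
  · rw [sumElim_ultraTuple, realize_ultraTuple]
    exact Eventually.of_forall fun σ => h_real (σ p)
  · rw [← realize_incompatFormula, sumElim_ultraTuple, realize_ultraTuple]
    have h_lt : ∀ᶠ w in (U : Filter ℕ).curry U, w.1 < w.2 :=
      eventually_curry_iff.2 (Eventually.of_forall fun m => hU (eventually_gt_atTop m))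
    filter_upwards [(hV p q hpq).eventually h_lt] with σ hσ
    exact realize_incompatFormula.2 (h_inc _ _ hσ)
  · rw [sumElim_ultraTuple, sumElim_ultraTuple, realize_ultraTuple, realize_ultraTuple]
    exact eventually_congr ((hV_fst p).eventually (hU (h_same ψ)))
  · contrapose
    intro h_none
    have h_eventually : ∀ᶠ w in (U : Filter ℕ).curry U, ¬ ψ.Realize
        (Sum.elim (fun w => a w.1 w.2) (Sum.elim (a (s w.1 i)) (a (s w.2 j)))) := by
      refine eventually_curry_iff.2 (Eventually.of_forall fun n => ?_)
      rw [← eventually_comp_iff_of_tendsto (hV_fst q), Ultrafilter.eventually_not,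
        ← realize_ultraTuple, ← sumElim_ultraTuple, ← sumElim_ultraTuple]
      exact not_exists.1 h_none fun l => (s n i, l)
    rw [sumElim_ultraTuple, sumElim_ultraTuple, realize_ultraTuple, ← Ultrafilter.eventually_not]
    exact (hV p q hpq).eventually h_eventually

end Array

namespace IsCoheirArray

open Substructure Set

section Relation

variable {κ α : Type*} [LinearOrder κ] {mx my : ℕ} {φ : L.Formula (Fin mx ⊕ Fin my)} {b : α → M}
  {e : Fin mx → M} {c : κ → Bool → Fin my → M} {r : M → M → Prop} {θ : L.Formula (Fin 2)}

lemma relIndep (hc : IsCoheirArray φ b e c) (hθ : ∀ x y, r x y ↔ θ.Realize ![x, y])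
    (hsymm : ∀ x y, r x y → r y x) (htrans : ∀ x y z, r x y → r y z → r x z) {p q : κ}
    (hpq : p < q) (i j : Bool) :
    RelIndep r (closure L (range b)) (closure L (range (Sum.elim b (c p i))))
      (closure L (range (Sum.elim b (c q j)))) := by
  intro x hx y hy hxy
  obtain ⟨t, rfl⟩ := mem_closure_range_iff.1 hx
  obtain ⟨s, rfl⟩ := mem_closure_range_iff.1 hy
  let ψ : L.Formula (α ⊕ (Fin my ⊕ Fin my)) :=
    θ.subst ![t.relabel (Sum.map id .inl), s.relabel (Sum.map id .inr)]
  have realize_ψ (u w : Fin my → M) : ψ.Realize (Sum.elim b (Sum.elim u w)) ↔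
      r (t.realize (Sum.elim b u)) (s.realize (Sum.elim b w)) := by
    rw [hθ, Formula.Realize, BoundedFormula.realize_subst, Formula.Realize, iff_iff_eq]
    congr 1
    ext k
    fin_cases k <;> simp [Term.realize_relabel, Sum.elim_comp_map]
  obtain ⟨a, ha⟩ := hc.coheir i j ψ hpq ((realize_ψ _ _).2 hxy)
  refine ⟨t.realize (Sum.elim b (b ∘ a)), mem_closure_range_iff.2
    ⟨t.relabel (Sum.elim id a), ?_⟩, htrans _ _ _ hxy (hsymm _ _ ((realize_ψ _ _).1 ha))⟩
  rw [Term.realize_relabel, Sum.comp_elim, Function.comp_id]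

/-- An `r`-class avoiding `b` meets the substructure generated by `b` and `c p i` for at most one
`p`. -/
lemma countable_not_relIndep (hc : IsCoheirArray φ b e c)
    (hθ : ∀ x y, r x y ↔ θ.Realize ![x, y])
    (hsymm : ∀ x y, r x y → r y x) (htrans : ∀ x y z, r x y → r y z → r x z)
    {A : Set M} (hA : A.Countable) (i : Bool) :
    {p | ¬ RelIndep r (closure L (range b)) A
      (closure L (range (Sum.elim b (c p i))))}.Countable := by
  let exceptional (x : M) : Set κ := {p | (∃ y ∈ closure L (range (Sum.elim b (c p i))), r x y) ∧
    ∀ z ∈ closure L (range b), ¬ r x z}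
  have h_subsingleton (x : M) : (exceptional x).Subsingleton := by
    refine Set.not_nontrivial_iff.1 fun h => ?_
    obtain ⟨p, ⟨⟨y, hy, hxy⟩, hx⟩, q, ⟨⟨y', hy', hxy'⟩, -⟩, hpq⟩ := h.exists_lt
    obtain ⟨z, hz, hyz⟩ := hc.relIndep hθ hsymm htrans hpq i i y hy y' hy'
      (htrans _ _ _ (hsymm _ _ hxy) hxy')
    exact hx z hz (htrans _ _ _ hxy hyz)
  refine (hA.biUnion fun x _ => (h_subsingleton x).countable).mono fun p hp => ?_
  simp only [RelIndep, mem_ofPred_eq, not_forall, not_exists, not_and] at hp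
  obtain ⟨x, hx, y, hy, hxy, h_none⟩ := hp
  exact mem_biUnion hx ⟨⟨y, hy, hxy⟩, h_none⟩

end Relation

section Feq

variable {κ α : Type*} [LinearOrder κ] {mx my : ℕ} {φ : Lfeq.Formula (Fin mx ⊕ Fin my)}
  {N : Type*} [Lfeq.Structure N] {b : α → N} {e : Fin mx → N} {c : κ → Bool → Fin my → N}

lemma eq_iff_realize (x y : N) :
    x = y ↔ (Term.equal (.var 0) (.var 1) : Lfeq.Formula (Fin 2)).Realize ![x, y] := by
  simp

lemma feqE_iff_realize (x y : N) :
    feqE x y ↔ (fmlE (.var 0) (.var 1) : Lfeq.Formula (Fin 2)).Realize ![x, y] := by simp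

lemma feqIndep (hc : IsCoheirArray φ b e c) (hN : IsFeqStructure N) {p q : κ} (hpq : p < q)
    (i j : Bool) :
    FeqIndep (closure Lfeq (range b) : Set N) (closure Lfeq (range (Sum.elim b (c p i))))
      (closure Lfeq (range (Sum.elim b (c q j)))) :=
  ⟨hc.relIndep eq_iff_realize (fun _ _ => Eq.symm) (fun _ _ _ => Eq.trans) hpq i j,
    hc.relIndep feqE_iff_realize (fun _ _ => hN.feqE_symm) (fun _ _ _ => hN.feqE_trans) hpq i j⟩

lemma countable_not_feqIndep (hc : IsCoheirArray φ b e c) (hN : IsFeqStructure N) {A : Set N}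
    (hA : A.Countable) (i : Bool) :
    {p | ¬ FeqIndep (closure Lfeq (range b) : Set N) A
      (closure Lfeq (range (Sum.elim b (c p i))))}.Countable := by
  refine ((hc.countable_not_relIndep eq_iff_realize (fun _ _ => Eq.symm) (fun _ _ _ => Eq.trans)
    hA i).union (hc.countable_not_relIndep feqE_iff_realize (fun _ _ => hN.feqE_symm)
    (fun _ _ _ => hN.feqE_trans) hA i)).mono fun p hp => ?_
  exact not_and_or.1 hp

lemma exists_lt_feqIndep [Uncountable κ] (hc : IsCoheirArray φ b e c) (hN : IsFeqStructure N)
    {A : Set N} (hA : A.Countable) (i : Bool) :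
    ∃ p q, p < q ∧
      FeqIndep (closure Lfeq (range b) : Set N) A (closure Lfeq (range (Sum.elim b (c p i)))) ∧
      FeqIndep (closure Lfeq (range b) : Set N) A (closure Lfeq (range (Sum.elim b (c q i)))) := by
  have h_countable := hc.countable_not_feqIndep hN hA i
  have h_nontrivial : {p | FeqIndep (closure Lfeq (range b) : Set N) A
      (closure Lfeq (range (Sum.elim b (c p i))))}.Nontrivial := by
    refine not_subsingleton_iff.1 fun h => not_countable_univ (α := κ) ?_
    exact (h.countable.union h_countable).mono fun p _ => em _
  obtain ⟨p, hp, q, hq, hpq⟩ := h_nontrivial.exists_lt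
  exact ⟨p, q, hpq, hp, hq⟩

end Feq

end IsCoheirArray

instance : Countable Lfeq.Symbols := by
  have (n : ℕ) : Subsingleton (Lfeq.Functions n) := ⟨by rintro ⟨⟩ ⟨⟩; rfl⟩
  have (n : ℕ) : Finite (Lfeq.Relations n) := by
    refine Finite.of_injective (fun | .P | .E => true | .Q | .R => false) ?_
    rintro ⟨⟩ ⟨⟩ h <;> first | rfl | exact absurd h (by decide)
  exact inferInstanceAs (Countable ((Σ n, Lfeq.Functions n) ⊕ Σ n, Lfeq.Relations n))

section Amalgam

open Substructure Set

variable {κ α : Type*} [LinearOrder κ] {mx my : ℕ} {φ : Lfeq.Formula (Fin mx ⊕ Fin my)}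

universe u in
/-- `f₁ e = f₂ e` would solve both `φ(x̄, c q 0)` and `φ(x̄, c p 1)` as seen by `f₀`. -/
lemma IsCoheirArray.exists_amalgam [Uncountable κ] [Countable α] {N : Type u} [Lfeq.Structure N]
    {b : α → N} {e : Fin mx → N} {c : κ → Bool → Fin my → N} (hc : IsCoheirArray φ b e c)
    (hN : IsFeqStructure N) :
    ∃ (M : Type u) (_ : Lfeq.Structure M) (f₀ f₁ f₂ : N ↪[Lfeq] M) (p q : κ), IsFeqStructure M ∧
      p < q ∧ f₁ ∘ e = f₂ ∘ e ∧ f₀ ∘ c q false = f₁ ∘ c q false ∧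
      f₀ ∘ c p true = f₂ ∘ c p false := by
  have hA : (closure Lfeq (range (Sum.elim b e)) : Set N).Countable :=
    (countable_range _).substructure_closure Lfeq
  obtain ⟨p, q, hpq, hAp, hAq⟩ := hc.exists_lt_feqIndep hN hA false
  obtain ⟨τ, hτ⟩ := exists_closure_embedding (hc.realize_iff p)
  have base_le {β : Type} (d : β → N) :
      closure Lfeq (range b) ≤ closure Lfeq (range (Sum.elim b d)) :=
    closure_mono (Sum.elim_range b d ▸ subset_union_left)
  have mem_right {β : Type} (d : β → N) (k : β) : d k ∈ closure Lfeq (range (Sum.elim b d)) :=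
    subset_closure ⟨.inr k, rfl⟩
  have range_τ : range τ ⊆ closure Lfeq (range (Sum.elim b (c p true))) := by
    rintro _ ⟨x, rfl⟩
    obtain ⟨t, ht⟩ := mem_closure_range_iff.1 x.2
    exact mem_closure_range_iff.2 ⟨t, (hτ t x ht).symm⟩
  have τ_base (x) (hx : x ∈ closure Lfeq (range b)) : τ ⟨x, base_le _ hx⟩ = x := by
    obtain ⟨t, rfl⟩ := mem_closure_range_iff.1 hx
    rw [hτ (t.relabel .inl)] <;> rw [Term.realize_relabel, Sum.elim_comp_inl]
  obtain ⟨M, _, f₀, f₁, f₂, hM, h₁₂, h₀₁, h₀₂⟩ := FeqIndep.exists_amalgam hN (base_le e)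
    (base_le (c p false)) (base_le (c q false)) τ τ_base hAp hAq
    ((hc.feqIndep hN hpq true false).mono_left range_τ)
  refine ⟨M, _, f₀, f₁, f₂, p, q, hM, hpq, funext fun k => h₁₂ _ (mem_right e k),
    funext fun k => h₀₁ _ (mem_right _ k), funext fun k => ?_⟩
  have hk : τ ⟨_, mem_right _ k⟩ = c p true k := hτ (.var (.inr k)) _ rfl
  exact (congrArg f₀ hk).symm.trans (h₀₂ ⟨_, mem_right _ k⟩)

end Amalgam

lemma IsModelCompletion.exists_realize_iff {T T' : L.Theory} (h : IsModelCompletion T T')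
    {N D : Type} [L.Structure N] [Nonempty N] [L.Structure D] [Nonempty D] (hN : N ⊨ T')
    (hD : D ⊨ T) :
    ∃ (N' : Type) (_ : L.Structure N') (f : D ↪[L] N'), ∀ (g : N ↪[L] D) {β : Type} [Finite β]
      (ψ : L.Formula β) (v : β → N), ψ.Realize (f ∘ g ∘ v) ↔ ψ.Realize v := by
  obtain ⟨N', ⟨f⟩⟩ : ∃ N' : T'.ModelType, Nonempty (D ↪[L] N') := h.2.1 (.of T D)
  refine ⟨N', inferInstance, f, fun g {β} _ ψ v => ?_⟩
  obtain ⟨k, ⟨σ⟩⟩ := Finite.exists_equiv_fin β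
  have h_fin : (ψ.relabel σ).Realize ((f ∘ g) ∘ v ∘ σ.symm) ↔ (ψ.relabel σ).Realize (v ∘ σ.symm) :=
    h.2.2.1 (.of T' N) N' (f.comp g) k (ψ.relabel σ) (v ∘ σ.symm)
  have hv : (v ∘ σ.symm) ∘ σ = v := by rw [Function.comp_assoc, σ.symm_comp_self, Function.comp_id]
  rwa [Formula.realize_relabel, Formula.realize_relabel, Function.comp_assoc, hv] at h_fin

/-- The theory `T*_feq` (the model completion of `T_feq`, a complete theory)
does not have SOP₁: no formula `φ(x̄,ȳ)` exemplifies SOP₁ in the monster model of `T*_feq`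
(equivalently, in any model of `T*_feq`). -/
theorem Tfeq_modelCompletion_NSOP1 (T' : Lfeq.Theory)
    (hmc : IsModelCompletion Tfeq T') (hcomp : T'.IsComplete)
    (𝔠 : Theory.ModelType.{0, 0, 0} T') {mx my : ℕ}
    (φ : Lfeq.Formula (Fin mx ⊕ Fin my)) :
    ¬ ExemplifiesSOP1 φ 𝔠 := by
  intro hφ
  obtain ⟨N, _, _, b, e, c, h𝔠N, hc⟩ := hφ.exists_isCoheirArray ℝ
  have hNT : N ⊨ T' := h𝔠N.theory_model_iff.1 inferInstance
  have hN : IsFeqStructure N := isFeqStructure_of_models (hmc.1 (Theory.ModelType.of T' N))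
  obtain ⟨M, _, f₀, f₁, f₂, p, q, hM, hpq, he, hq, hp⟩ := hc.exists_amalgam hN
  have : Nonempty M := .map f₀ inferInstance
  obtain ⟨N', _, f, hf⟩ := hmc.exists_realize_iff hNT (models_of_isFeqStructure hM)
  have h_inc := (hf f₀ _ _).2 (realize_incompatFormula.2 (hc.inconsistent hpq))
  have hφ₁ := (hf f₁ φ _).2 (hc.realize q)
  have hφ₂ := (hf f₂ φ _).2 (hc.realize p)
  rw [Sum.comp_elim, Sum.comp_elim] at h_inc hφ₁ hφ₂
  rw [hq, hp, realize_incompatFormula] at h_inc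
  rw [← he] at hφ₂
  exact h_inc ⟨_, hφ₁, hφ₂⟩

end SopPaper
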